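/- Let h be a permutation of a finite set X of size d with cycle type μ (including fixed points), and let i be a positive integer. Then the number of transpositions τ of X such that the cycle type of τ∘h equals μ with two parts equal to i removed and one part equal to 2i added is exactly i²·m_i(μ)·(m_i(μ) − 1)/2. -/

import Mathlib

open Finset Equiv

/-- The cycle type of a permutation including fixed points: the multiset of the sizes of
all cycles (orbits), where each fixed point contributes a part equal to `1`. -/
def cycleTypeFull {X : Type*} [Fintype X] [DecidableEq X] (h : Equiv.Perm X) : Multiset ℕ :=
  h.cycleType + Multiset.replicate (Finset.univ.filter fun x => h x = x).card 1

/-!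
If `s` and `t` lie in different cycles of `h`, of sizes `a` and `b`, then passing to `swap s t * h`
replaces these two cycles by their union, so the cycle type loses `a` and `b` and gains `a + b`;
this is the prescribed change exactly when `a = b = i`. If `s` and `t` lie in the same cycle, every
cycle of `swap s t * h` is contained in a cycle of `h`, so the number of cycles does not drop, while
the prescribed change lowers it by one. The transpositions to count are therefore the edges of the
graph joining points of distinct `i`-cycles, and there are `m (m - 1)` ordered pairs of distinct
`i`-cycles, each contributing `i ^ 2` ordered pairs of points.
-/

open Equiv.Perm

section Swap

variable {α : Type*} [Finite α] {f : Perm α} {s t x y : α}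

theorem mem_of_sameCycle_of_mapsTo {S : Set α} (hS : Set.MapsTo f S S) (hx : x ∈ S)
    (hxy : f.SameCycle x y) : y ∈ S := by
  obtain ⟨n, rfl⟩ := hxy.exists_nat_pow_eq
  rw [← iterate_eq_pow]
  exact hS.iterate n hx

variable [DecidableEq α]

theorem sameCycle_of_sameCycle_swap_mul (hst : f.SameCycle s t)
    (hxy : (swap s t * f).SameCycle x y) : f.SameCycle x y := by
  refine mem_of_sameCycle_of_mapsTo (S := {z | f.SameCycle x z}) (fun z hz => ?_) (.refl f x) hxy
  have hfz : f.SameCycle x (f z) := hz.apply_right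
  simp only [Set.mem_ofPred_eq, Perm.mul_apply, swap_apply_def]
  split_ifs with hs ht
  · exact (hs ▸ hfz).trans hst
  · exact (ht ▸ hfz).trans hst.symm
  · exact hfz

/- As long as `f` follows its cycle from `s` it never meets `t`, so `swap s t * f` takes the same
path, until it reaches `f⁻¹ s`, which it sends to `t`. -/
theorem sameCycle_swap_mul (hst : ¬ f.SameCycle s t) : (swap s t * f).SameCycle s t := by
  have hmaps : Set.MapsTo f {z | f.SameCycle s z ∧ (swap s t * f).SameCycle s z}
      {z | f.SameCycle s z ∧ (swap s t * f).SameCycle s z} := by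
    rintro z ⟨hz, hgz⟩
    refine ⟨hz.apply_right, ?_⟩
    have hgfz : (swap s t * f).SameCycle s (swap s t (f z)) := hgz.apply_right
    have hft : f z ≠ t := fun hft => hst (hft ▸ hz.apply_right)
    by_cases hfs : f z = s
    · rw [hfs]
    · rwa [swap_apply_of_ne_of_ne hfs hft] at hgfz
  have hinv : f.SameCycle s (f⁻¹ s) := sameCycle_symm_apply_right.2 (.refl f s)
  have hpre : (swap s t * f).SameCycle s (f⁻¹ s) :=
    (mem_of_sameCycle_of_mapsTo hmaps ⟨.refl f s, .refl _ s⟩ hinv).2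
  simpa using hpre.apply_right

theorem sameCycle_swap_mul_of_sameCycle (hst : ¬ f.SameCycle s t) (hxy : f.SameCycle x y) :
    (swap s t * f).SameCycle x y := by
  refine sameCycle_of_sameCycle_swap_mul (sameCycle_swap_mul hst) ?_
  rwa [swap_mul_self_mul]

theorem sameCycle_swap_mul_left_iff (hst : ¬ f.SameCycle s t) :
    (swap s t * f).SameCycle s y ↔ f.SameCycle s y ∨ f.SameCycle t y := by
  constructor
  · refine mem_of_sameCycle_of_mapsTo (S := {z | f.SameCycle s z ∨ f.SameCycle t z})
      (fun z hz => ?_) (.inl (.refl f s))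
    simp only [Set.mem_ofPred_eq, Perm.mul_apply, swap_apply_def]
    split_ifs
    · exact .inr (.refl f t)
    · exact .inl (.refl f s)
    · exact hz.imp (·.apply_right) (·.apply_right)
  · rintro (hs | ht)
    · exact sameCycle_swap_mul_of_sameCycle hst hs
    · exact (sameCycle_swap_mul hst).trans (sameCycle_swap_mul_of_sameCycle hst ht)

theorem sameCycle_swap_mul_iff_of_not_sameCycle (hst : ¬ f.SameCycle s t)
    (hs : ¬ f.SameCycle s x) (ht : ¬ f.SameCycle t x) :
    (swap s t * f).SameCycle x y ↔ f.SameCycle x y := by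
  refine ⟨mem_of_sameCycle_of_mapsTo (S := {z | f.SameCycle x z}) (fun z hz => ?_) (.refl f x),
    sameCycle_swap_mul_of_sameCycle hst⟩
  have hfz : f.SameCycle x (f z) := hz.apply_right
  have hfs : f z ≠ s := fun h => hs (h ▸ hfz.symm)
  have hft : f z ≠ t := fun h => ht (h ▸ hfz.symm)
  rwa [Set.mem_ofPred_eq, Perm.mul_apply, swap_apply_of_ne_of_ne hfs hft]

end Swap

section Multiset

variable {μ ν : Multiset ℕ} {a b i : ℕ}

theorem cons_cons_erase_erase_of_sum_eq (hi : 0 < i)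
    (hsum : ((μ.erase i).erase i + {2 * i}).sum = μ.sum) :
    i ::ₘ i ::ₘ (μ.erase i).erase i = μ := by
  rw [Multiset.sum_add, Multiset.sum_singleton] at hsum
  by_cases h₁ : i ∈ μ
  · have hsum₁ := Multiset.sum_erase h₁
    by_cases h₂ : i ∈ μ.erase i
    · rw [Multiset.cons_erase h₂, Multiset.cons_erase h₁]
    · rw [Multiset.erase_of_notMem h₂] at hsum
      omega
  · rw [Multiset.erase_of_notMem h₁, Multiset.erase_of_notMem h₁] at hsum
    omega

theorem ne_erase_erase_add_of_card_le (hi : 0 < i) (hsum : ν.sum = μ.sum)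
    (hcard : μ.card ≤ ν.card) : ν ≠ (μ.erase i).erase i + {2 * i} := by
  rintro rfl
  rw [← cons_cons_erase_erase_of_sum_eq hi hsum] at hcard
  simp at hcard

theorem eq_erase_erase_add_iff_of_cons_cons_eq (hi : 0 < i)
    (hjoin : a ::ₘ b ::ₘ ν = (a + b) ::ₘ μ) :
    ν = (μ.erase i).erase i + {2 * i} ↔ a = i ∧ b = i := by
  constructor
  · rintro rfl
    have hsum : ((μ.erase i).erase i + {2 * i}).sum = μ.sum := by
      have hsum_join := congrArg Multiset.sum hjoin
      simp only [Multiset.sum_cons] at hsum_join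
      omega
    rw [← cons_cons_erase_erase_of_sum_eq hi hsum] at hjoin
    -- Up to common parts, `hjoin` reads `{a, b, 2i} = {a + b, i, i}`; count `i`.
    have hcount := congrArg (Multiset.count i) hjoin
    simp only [Multiset.count_cons, Multiset.count_add, Multiset.count_singleton,
      Multiset.erase_cons_head] at hcount
    split_ifs at hcount <;> omega
  · rintro ⟨rfl, rfl⟩
    have herase := congrArg (fun m => (m.erase b).erase b) hjoin
    rw [add_comm, Multiset.singleton_add]
    simpa [← two_mul, Multiset.erase_cons_tail, hi.ne'] using herase

end Multiset

section Counting

variable {α : Type*} [DecidableEq α]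

theorem card_filter_part_ne_part {s : Finset α} (P : Finpartition s) (i : ℕ) :
    #{p ∈ s ×ˢ s | P.part p.1 ≠ P.part p.2 ∧ #(P.part p.1) = i ∧ #(P.part p.2) = i} =
      i ^ 2 * (#{A ∈ P.parts | #A = i} * (#{A ∈ P.parts | #A = i} - 1)) := by
  set S : Finset (α × α) :=
    {p ∈ s ×ˢ s | P.part p.1 ≠ P.part p.2 ∧ #(P.part p.1) = i ∧ #(P.part p.2) = i} with hS
  set Q : Finset (Finset α) := {A ∈ P.parts | #A = i} with hQ
  have hmaps : Set.MapsTo (fun p : α × α => (P.part p.1, P.part p.2)) S Q.offDiag := by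
    intro p hp
    simp_all
  have hfiber : ∀ q ∈ Q.offDiag, #{p ∈ S | (P.part p.1, P.part p.2) = q} = i ^ 2 := by
    rintro ⟨A, B⟩ hq
    simp only [hQ, mem_offDiag, mem_filter] at hq
    obtain ⟨⟨hA, hAi⟩, ⟨hB, hBi⟩, hAB⟩ := hq
    have hprod : {p ∈ S | (P.part p.1, P.part p.2) = (A, B)} = A ×ˢ B := by
      ext ⟨x, y⟩
      simp only [hS, mem_filter, mem_product, Prod.mk.injEq, P.part_eq_iff_mem hA,
        P.part_eq_iff_mem hB]
      refine ⟨And.right, fun ⟨hx, hy⟩ => ⟨⟨⟨P.le hA hx, P.le hB hy⟩, ?_⟩, hx, hy⟩⟩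
      rw [P.part_eq_of_mem hA hx, P.part_eq_of_mem hB hy]
      exact ⟨hAB, hAi, hBi⟩
    rw [hprod, card_product, hAi, hBi, sq]
  rw [card_eq_sum_card_fiberwise hmaps, sum_congr rfl hfiber, sum_const, offDiag_card,
    smul_eq_mul, mul_comm, Nat.mul_sub_one]

theorem swap_eq_swap_iff {a b s t : α} (hst : s ≠ t) :
    swap a b = swap s t ↔ s(a, b) = s(s, t) := by
  rw [Sym2.eq_iff]
  refine ⟨fun hswap => ?_, ?_⟩
  · have hs : swap a b s = t := by rw [hswap, swap_apply_left]
    rw [swap_apply_def] at hs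
    grind
  · rintro (⟨rfl, rfl⟩ | ⟨rfl, rfl⟩)
    · rfl
    · exact swap_comm _ _

theorem two_mul_ncard_swap_of_adj [Fintype α] (G : SimpleGraph α) [DecidableRel G.Adj] :
    2 * {τ : Perm α | ∃ s t, G.Adj s t ∧ swap s t = τ}.ncard =
      #{p : α × α | G.Adj p.1 p.2} := by
  let toSwap : Sym2 α → Perm α := Sym2.lift ⟨swap, swap_comm⟩
  have himage : {τ : Perm α | ∃ s t, G.Adj s t ∧ swap s t = τ} = toSwap '' G.edgeSet := by
    ext τ
    simp [toSwap, Sym2.exists]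
  have hinj : Set.InjOn toSwap G.edgeSet := by
    intro e he e' he' hee'
    induction e with | _ a b
    induction e' with | _ s t
    exact (swap_eq_swap_iff (G.mem_edgeSet.1 he').ne).1 hee'
  rw [himage, hinj.ncard_image, ← G.coe_edgeFinset, Set.ncard_coe_finset,
    G.two_mul_card_edgeFinset]

end Counting

section CyclePartition

variable {X : Type*} [Fintype X] [DecidableEq X] {h : Perm X} {s t x y : X} {i : ℕ}

/-- The partition of `X` into the cycles of `h`, fixed points being singleton parts. The cycle of
`x` is `(cyclePartition h).part x`. -/
def cyclePartition (h : Perm X) : Finpartition (univ : Finset X) :=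
  letI : DecidableRel (SameCycle.setoid h).r := inferInstanceAs (DecidableRel h.SameCycle)
  Finpartition.ofSetoid (SameCycle.setoid h)

theorem mem_part_cyclePartition : y ∈ (cyclePartition h).part x ↔ h.SameCycle x y :=
  letI : DecidableRel (SameCycle.setoid h).r := inferInstanceAs (DecidableRel h.SameCycle)
  Finpartition.mem_part_ofSetoid_iff_rel

theorem part_cyclePartition_eq_iff :
    (cyclePartition h).part x = (cyclePartition h).part y ↔ h.SameCycle x y := by
  rw [← Finpartition.mem_part_iff_part_eq_part _ (mem_univ x) (mem_univ y),
    mem_part_cyclePartition, sameCycle_comm]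

theorem part_cyclePartition_of_apply_eq (hx : h x = x) : (cyclePartition h).part x = {x} := by
  ext y
  rw [mem_part_cyclePartition, mem_singleton]
  exact ⟨fun hxy => (hxy.eq_of_left hx).symm, fun hyx => hyx ▸ .refl h x⟩

theorem part_cyclePartition_of_apply_ne (hx : h x ≠ x) :
    (cyclePartition h).part x = (h.cycleOf x).support := by
  ext y
  rw [mem_part_cyclePartition, mem_support_cycleOf_iff' hx]

theorem mem_parts_cyclePartition {C : Finset X} :
    C ∈ (cyclePartition h).parts ↔ ∃ x, (cyclePartition h).part x = C := by
  refine ⟨fun hC => ?_, ?_⟩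
  · obtain ⟨x, -, hx⟩ := (cyclePartition h).part_surjOn hC
    exact ⟨x, hx⟩
  · rintro ⟨x, rfl⟩
    exact (cyclePartition h).part_mem.2 (mem_univ x)

theorem parts_cyclePartition (h : Perm X) :
    (cyclePartition h).parts = h.cycleFactorsFinset.image support ∪
      ({x | h x = x} : Finset X).image singleton := by
  ext C
  simp only [mem_parts_cyclePartition, mem_union, mem_image, mem_filter_univ]
  constructor
  · rintro ⟨x, rfl⟩
    by_cases hx : h x = x
    · exact .inr ⟨x, hx, (part_cyclePartition_of_apply_eq hx).symm⟩
    · exact .inl ⟨h.cycleOf x, cycleOf_mem_cycleFactorsFinset_iff.2 (mem_support.2 hx),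
        (part_cyclePartition_of_apply_ne hx).symm⟩
  · rintro (⟨c, hc, rfl⟩ | ⟨x, hx, rfl⟩)
    · obtain ⟨x, hxc⟩ := (mem_cycleFactorsFinset_iff.1 hc).1.nonempty_support
      have hx : h x ≠ x := mem_support.1 (mem_cycleFactorsFinset_support_le hc hxc)
      exact ⟨x, by rw [part_cyclePartition_of_apply_ne hx, ← cycle_is_cycleOf hxc hc]⟩
    · exact ⟨x, part_cyclePartition_of_apply_eq hx⟩

theorem injOn_support_cycleFactorsFinset (h : Perm X) :
    Set.InjOn support (h.cycleFactorsFinset : Set (Perm X)) := by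
  intro c hc d hd hcd
  obtain ⟨x, hxc⟩ := (mem_cycleFactorsFinset_iff.1 hc).1.nonempty_support
  rw [cycle_is_cycleOf hxc hc, cycle_is_cycleOf (hcd ▸ hxc) hd]

theorem cycleTypeFull_eq_map_card_parts (h : Perm X) :
    cycleTypeFull h = (cyclePartition h).parts.val.map card := by
  have hdisj : Disjoint (h.cycleFactorsFinset.image support)
      (({x | h x = x} : Finset X).image singleton) := by
    simp only [disjoint_left, mem_image]
    rintro _ ⟨c, hc, rfl⟩ ⟨x, -, hx⟩
    have hc2 := (mem_cycleFactorsFinset_iff.1 hc).1.two_le_card_support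
    rw [← hx, card_singleton] at hc2
    omega
  rw [parts_cyclePartition, ← disjUnion_eq_union _ _ hdisj, disjUnion_val, Multiset.map_add,
    image_val_of_injOn (injOn_support_cycleFactorsFinset h),
    image_val_of_injOn singleton_injective.injOn, Multiset.map_map, Multiset.map_map,
    cycleTypeFull, cycleType_def]
  simp only [Function.comp_def, card_singleton, Multiset.map_const', card_val]

theorem sum_cycleTypeFull (h : Perm X) : (cycleTypeFull h).sum = Fintype.card X := by
  rw [cycleTypeFull_eq_map_card_parts]
  exact (cyclePartition h).sum_card_parts

theorem card_cycleTypeFull (h : Perm X) :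
    (cycleTypeFull h).card = #(cyclePartition h).parts := by
  rw [cycleTypeFull_eq_map_card_parts, Multiset.card_map, card_val]

theorem count_cycleTypeFull (h : Perm X) (i : ℕ) :
    (cycleTypeFull h).count i = #{C ∈ (cyclePartition h).parts | #C = i} := by
  rw [cycleTypeFull_eq_map_card_parts, Multiset.count_map]
  simp only [eq_comm (a := i), ← filter_val, card_val]

theorem card_cycleTypeFull_le_card_swap_mul (hst : h.SameCycle s t) :
    (cycleTypeFull h).card ≤ (cycleTypeFull (swap s t * h)).card := by
  rw [card_cycleTypeFull, card_cycleTypeFull]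
  refine Finpartition.card_mono fun C hC => ?_
  obtain ⟨x, rfl⟩ := mem_parts_cyclePartition.1 hC
  refine ⟨_, mem_parts_cyclePartition.2 ⟨x, rfl⟩, fun y hy => ?_⟩
  rw [mem_part_cyclePartition] at hy ⊢
  exact sameCycle_of_sameCycle_swap_mul hst hy

theorem part_cyclePartition_swap_mul_left (hst : ¬ h.SameCycle s t) :
    (cyclePartition (swap s t * h)).part s =
      (cyclePartition h).part s ∪ (cyclePartition h).part t := by
  ext y
  simp only [mem_union, mem_part_cyclePartition, sameCycle_swap_mul_left_iff hst]

theorem part_cyclePartition_swap_mul_of_not_sameCycle (hst : ¬ h.SameCycle s t)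
    (hs : ¬ h.SameCycle s x) (ht : ¬ h.SameCycle t x) :
    (cyclePartition (swap s t * h)).part x = (cyclePartition h).part x := by
  ext y
  simp only [mem_part_cyclePartition, sameCycle_swap_mul_iff_of_not_sameCycle hst hs ht]

theorem parts_cyclePartition_swap_mul (hst : ¬ h.SameCycle s t) :
    (cyclePartition (swap s t * h)).parts =
      insert ((cyclePartition h).part s ∪ (cyclePartition h).part t)
        (((cyclePartition h).parts.erase ((cyclePartition h).part s)).erase
          ((cyclePartition h).part t)) := by
  ext C
  simp only [mem_insert, mem_erase, mem_parts_cyclePartition,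
    ← part_cyclePartition_swap_mul_left hst]
  constructor
  · rintro ⟨x, rfl⟩
    by_cases hx : h.SameCycle s x ∨ h.SameCycle t x
    · exact .inl (part_cyclePartition_eq_iff.2 ((sameCycle_swap_mul_left_iff hst).2 hx).symm)
    · obtain ⟨hs, ht⟩ := not_or.1 hx
      rw [part_cyclePartition_swap_mul_of_not_sameCycle hst hs ht]
      exact .inr ⟨fun hxt => ht (part_cyclePartition_eq_iff.1 hxt.symm),
        fun hxs => hs (part_cyclePartition_eq_iff.1 hxs.symm), x, rfl⟩
  · rintro (rfl | ⟨ht, hs, x, rfl⟩)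
    · exact ⟨s, rfl⟩
    · rw [Ne, eq_comm, part_cyclePartition_eq_iff] at hs ht
      exact ⟨x, part_cyclePartition_swap_mul_of_not_sameCycle hst hs ht⟩

theorem disjoint_part_cyclePartition (hst : ¬ h.SameCycle s t) :
    Disjoint ((cyclePartition h).part s) ((cyclePartition h).part t) :=
  (cyclePartition h).disjoint (mem_parts_cyclePartition.2 ⟨s, rfl⟩)
    (mem_parts_cyclePartition.2 ⟨t, rfl⟩) (part_cyclePartition_eq_iff.not.2 hst)

theorem cycleTypeFull_swap_mul (hst : ¬ h.SameCycle s t) :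
    #((cyclePartition h).part s) ::ₘ #((cyclePartition h).part t) ::ₘ
        cycleTypeFull (swap s t * h) =
      (#((cyclePartition h).part s) + #((cyclePartition h).part t)) ::ₘ cycleTypeFull h := by
  set A := (cyclePartition h).part s
  set B := (cyclePartition h).part t
  set R := ((cyclePartition h).parts.erase A).erase B with hR
  have hAB : Disjoint A B := disjoint_part_cyclePartition hst
  have hAmem : A ∈ (cyclePartition h).parts := mem_parts_cyclePartition.2 ⟨s, rfl⟩
  have hBmem : B ∈ (cyclePartition h).parts.erase A :=
    mem_erase.2 ⟨part_cyclePartition_eq_iff.not.2 (mt SameCycle.symm hst),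
      mem_parts_cyclePartition.2 ⟨t, rfl⟩⟩
  have hunion : A ∪ B ∉ R := fun hmem => by
    have hpart : A = A ∪ B :=
      (cyclePartition h).part_eq_of_mem (mem_of_mem_erase (mem_of_mem_erase hmem))
        (mem_union_left B (mem_part_cyclePartition.2 (.refl h s)))
    have ht : t ∈ A := hpart ▸ mem_union_right A (mem_part_cyclePartition.2 (.refl h t))
    exact hst (mem_part_cyclePartition.1 ht)
  have hparts : (cyclePartition h).parts.val = A ::ₘ B ::ₘ R.val := by
    rw [hR, erase_val, Multiset.cons_erase hBmem, erase_val, Multiset.cons_erase hAmem]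
  rw [cycleTypeFull_eq_map_card_parts, cycleTypeFull_eq_map_card_parts,
    parts_cyclePartition_swap_mul hst, insert_val_of_notMem hunion, hparts]
  simp only [Multiset.map_cons, card_union_of_disjoint hAB]
  simp only [← Multiset.singleton_add]
  ac_rfl

theorem cycleTypeFull_swap_mul_eq_erase_erase_add_iff (hi : 0 < i) :
    cycleTypeFull (swap s t * h) = ((cycleTypeFull h).erase i).erase i + {2 * i} ↔
      ¬ h.SameCycle s t ∧ #((cyclePartition h).part s) = i ∧ #((cyclePartition h).part t) = i := by
  by_cases hst : h.SameCycle s t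
  · have hsum : (cycleTypeFull (swap s t * h)).sum = (cycleTypeFull h).sum := by
      rw [sum_cycleTypeFull, sum_cycleTypeFull]
    simpa [hst] using
      ne_erase_erase_add_of_card_le hi hsum (card_cycleTypeFull_le_card_swap_mul hst)
  · simpa [hst] using eq_erase_erase_add_iff_of_cons_cons_eq hi (cycleTypeFull_swap_mul hst)

/-- The graph on `X` joining points that lie in distinct cycles of `h`, both of size `i`. An edge
`s(s, t)` stands for the transposition `swap s t`, which merges the cycles of `s` and `t`. -/
def joinGraph (h : Perm X) (i : ℕ) : SimpleGraph X where
  Adj s t := ¬ h.SameCycle s t ∧ #((cyclePartition h).part s) = i ∧ #((cyclePartition h).part t) = i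
  symm := ⟨fun _ _ ⟨hst, hs, ht⟩ => ⟨mt SameCycle.symm hst, ht, hs⟩⟩
  loopless := ⟨fun s hs => hs.1 (.refl h s)⟩

theorem setOf_isSwap_and_cycleTypeFull_eq (h : Perm X) (hi : 0 < i) :
    {τ : Perm X | τ.IsSwap ∧
        cycleTypeFull (τ * h) = ((cycleTypeFull h).erase i).erase i + {2 * i}} =
      {τ | ∃ s t, (joinGraph h i).Adj s t ∧ swap s t = τ} := by
  ext τ
  constructor
  · rintro ⟨⟨s, t, -, rfl⟩, hτ⟩
    exact ⟨s, t, (cycleTypeFull_swap_mul_eq_erase_erase_add_iff hi).1 hτ, rfl⟩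
  · rintro ⟨s, t, hst, rfl⟩
    exact ⟨⟨s, t, hst.ne, rfl⟩, (cycleTypeFull_swap_mul_eq_erase_erase_add_iff hi).2 hst⟩

theorem two_mul_ncard_swap_joinGraph (h : Perm X) (i : ℕ) :
    2 * {τ : Perm X | ∃ s t, (joinGraph h i).Adj s t ∧ swap s t = τ}.ncard =
      i ^ 2 * ((cycleTypeFull h).count i * ((cycleTypeFull h).count i - 1)) := by
  classical
  rw [two_mul_ncard_swap_of_adj, count_cycleTypeFull, ← card_filter_part_ne_part]
  congr 1
  ext p
  rw [mem_filter_univ]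
  simp [joinGraph, part_cyclePartition_eq_iff]

end CyclePartition

/-- for a permutation `h` with cycle type `μ` (including fixed points) and a
positive integer `i`, the number of transpositions `τ` such that the cycle type of `τ ∘ h`
is `μ` with two parts `i` removed and one part `2i` added is exactly
`i² · m_i(μ) · (m_i(μ) − 1) / 2`. -/
theorem count_join_transpositions_eq
    {X : Type*} [Fintype X] [DecidableEq X] (h : Equiv.Perm X) (i : ℕ) (hi : 0 < i) :
    Set.ncard {τ : Equiv.Perm X | τ.IsSwap ∧
        cycleTypeFull (τ * h)
          = ((cycleTypeFull h).erase i).erase i + {2 * i}}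
      = i ^ 2 * (cycleTypeFull h).count i * ((cycleTypeFull h).count i - 1) / 2 := by
  rw [setOf_isSwap_and_cycleTypeFull_eq h hi, mul_assoc, ← two_mul_ncard_swap_joinGraph,
    Nat.mul_div_cancel_left _ two_pos]
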